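/- Let a = (a_1,…,a_t) ∈ F_{q^n}^t, let P ∈ F_q^{t×t}, let r ≥ 0 be an integer shift, and set b̂ = a·Pᵀ ∈ F_{q^n}^t. Define syndrome values s_p := Σ_{l=1}^{t} a_l (b̂_l)^{q^{r+p}} for p ≥ 0, and let S be the (n−k−t)×(t+1) matrix with (i,j) entry (s_{t+i−j})^{q^j} for 0 ≤ i ≤ n−k−t−1 and 0 ≤ j ≤ t, where t ≤ n−k. Then S factors as S = M_{n−k−t}(a)^{[t+r]} · Pᵀ · M_{t+1}(a)ᵀ. In particular, taking r = 1 with b̂ = a·Pᵀ replaced by ĉ = a·P gives S^{(1)} = M_{n−k−t}(a)^{[t+1]}·P·M_{t+1}(a)ᵀ, and taking r = k gives S^{(2)} = M_{n−k−t}(a)^{[t+k]}·Pᵀ·M_{t+1}(a)ᵀ. -/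

import Mathlib

open Matrix

/-!
Let `σ` be an endomorphism of `R` fixing the scalars `F`; over a finite field, `σ` is `x ↦ x ^ q`.
Applying `σ^j` to the syndrome `s (t + i - j)` turns the factor `σ^(r + t + i - j)` acting on `b`
into `σ^(t + r + i)`, which no longer depends on `j`. The syndrome matrix of any pair `(a, b)` is
therefore a product of a Moore matrix of `b` and a transposed Moore matrix of `a`; and when
`b = c · Pᵀ` with `P` over `F`, the matrix `Pᵀ` can be pulled out of the former since `σ` fixes it.
-/

/-- The shifted Moore matrix `M_r(a)^{[s]}` with respect to a self-map `σ`, where `σ` takes the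
place of the Frobenius map `x ↦ x ^ q`. -/
def shiftedMooreMatrix {ι R : Type*} (σ : R → R) (r s : ℕ) (a : ι → R) : Matrix (Fin r) ι R :=
  of fun i m => σ^[s + i] (a m)

/-- The syndrome `s_p` of the locators `a` and the values `b` with shift `r`, where `σ` takes the
place of the Frobenius map `x ↦ x ^ q`. -/
def syndrome {ι R : Type*} [Fintype ι] [NonUnitalNonAssocSemiring R] (σ : R → R) (r : ℕ)
    (a b : ι → R) (p : ℕ) : R :=
  ∑ l, a l * σ^[r + p] (b l)

/-- The matrix of a syndrome sequence `s` with `N` rows, columns indexed by `0, …, t` and entries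
`σ^j (s (t + i - j))`. The subtraction never truncates, because `j ≤ t`. -/
def syndromeMatrix {R : Type*} (σ : R → R) (N t : ℕ) (s : ℕ → R) :
    Matrix (Fin N) (Fin (t + 1)) R :=
  of fun i j => σ^[j] (s (t + i - j))

theorem shiftedMooreMatrix_vecMul_map {F R ι κ : Type*} [CommSemiring F] [Semiring R] [Algebra F R]
    [Fintype ι] (σ : R →ₐ[F] R) (r s : ℕ) (a : ι → R) (P : Matrix ι κ F) :
    shiftedMooreMatrix σ r s (a ᵥ* P.map (algebraMap F R)) =
      shiftedMooreMatrix σ r s a * P.map (algebraMap F R) := by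
  ext i l
  simp only [shiftedMooreMatrix, of_apply, mul_apply, vecMul, dotProduct, map_apply,
    ← AlgHom.coe_pow, map_sum, map_mul, AlgHom.commutes]

theorem iterate_syndrome {ι R : Type*} [Fintype ι] [Semiring R] (σ : R →+* R) (r : ℕ)
    (a b : ι → R) (p j : ℕ) :
    σ^[j] (syndrome σ r a b p) = ∑ l, σ^[j] (a l) * σ^[j + (r + p)] (b l) := by
  simp only [syndrome, ← RingHom.coe_pow, map_sum, map_mul, pow_add, RingHom.mul_def,
    RingHom.comp_apply]

theorem syndromeMatrix_syndrome {ι R : Type*} [Fintype ι] [CommSemiring R] (σ : R →+* R)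
    (N t r : ℕ) (a b : ι → R) :
    syndromeMatrix σ N t (syndrome σ r a b) =
      shiftedMooreMatrix σ N (t + r) b * (shiftedMooreMatrix σ (t + 1) 0 a)ᵀ := by
  ext i j
  have shift_eq : (j : ℕ) + (r + (t + i - j)) = t + r + i := by omega
  simp only [syndromeMatrix, shiftedMooreMatrix, of_apply, iterate_syndrome, shift_eq, mul_apply,
    transpose_apply, zero_add, mul_comm]

theorem syndrome_matrix_factorization_general {F R ι κ : Type*} [CommSemiring F] [CommSemiring R]
    [Algebra F R] [Fintype ι] [Fintype κ] (σ : R →ₐ[F] R) (N t r : ℕ) (a : ι → R) (c : κ → R)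
    (P : Matrix ι κ F) :
    syndromeMatrix σ N t (syndrome σ r a (c ᵥ* (P.map (algebraMap F R))ᵀ)) =
      shiftedMooreMatrix σ N (t + r) c * (P.map (algebraMap F R))ᵀ *
        (shiftedMooreMatrix σ (t + 1) 0 a)ᵀ := by
  rw [← transpose_map, ← shiftedMooreMatrix_vecMul_map]
  exact syndromeMatrix_syndrome (σ : R →+* R) N t r a _

/-- Let `a ∈ F_{q^n}^t`, `P ∈ F_q^{t×t}`, `r ≥ 0`, `bhat = a · Pᵀ`, and define
syndromes `s p = ∑ l, a l * bhat l ^ q ^ (r + p)`. Then the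
`(n−k−t) × (t+1)` syndrome matrix `S` with entries `S i j = (s (t + i − j)) ^ q ^ j`
factors as `S = M_{n−k−t}(a)^{[t+r]} · Pᵀ · M_{t+1}(a)ᵀ`. Taking `r = 1` (with `P`
replaced by `Pᵀ`) and `r = k` give the factorizations of `S⁽¹⁾` and `S⁽²⁾`. -/
theorem syndrome_matrix_factorization
    (q n k t : ℕ) (F K : Type) [Field F] [Fintype F] [Field K] [Fintype K] [Algebra F K]
    (hq : Fintype.card F = q) (hK : Fintype.card K = q ^ n)
    (ht : t ≤ n - k)
    (a : Fin t → K) (P : Matrix (Fin t) (Fin t) F) (r : ℕ)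
    (bhat : Fin t → K)
    (hbhat : ∀ l, bhat l = ∑ m, a m * algebraMap F K (Pᵀ m l))
    (s : ℕ → K) (hs : ∀ p, s p = ∑ l, a l * bhat l ^ q ^ (r + p))
    (S : Matrix (Fin (n - k - t)) (Fin (t + 1)) K)
    (hS : ∀ i j, S i j = s (t + (i : ℕ) - (j : ℕ)) ^ q ^ (j : ℕ)) :
    S = (Matrix.of fun (i : Fin (n - k - t)) (m : Fin t) => a m ^ q ^ (t + r + (i : ℕ))) *
        (P.map (algebraMap F K))ᵀ *
        (Matrix.of fun (j : Fin (t + 1)) (m : Fin t) => a m ^ q ^ (j : ℕ))ᵀ := by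
  subst hq
  obtain rfl : bhat = a ᵥ* (P.map (algebraMap F K))ᵀ := funext hbhat
  obtain rfl := funext hs
  ext i j
  simpa only [hS, of_apply, syndromeMatrix, syndrome, shiftedMooreMatrix,
    FiniteField.coe_frobeniusAlgHom, pow_iterate, zero_add] using
    congr_fun₂ (syndrome_matrix_factorization_general (FiniteField.frobeniusAlgHom F K)
      (n - k - t) t r a a P) i j
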